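/- arXiv:2101.07118 — 7 statements merged into one kernel-verified Lean document; each statement's English description precedes it below -/
import Mathlib

section
/- Let i₁, i₂ be two (not necessarily distinct) elements of C. If x : Fin N → (Fin n → ℝ) satisfies x i = x j for all i, j ∈ C, then the controlled vector field G defined by G(x) i = f (x i) - σ • ∑_{j} L'' i j • (H.mulVec (x j)) satisfies G(x) i₁ = G(x) i₂. In other words, the synchronization subspace { x : Fin N → ℝⁿ | x i = x j for all i, j ∈ C } is invariant under the controlled vector field. -/
section Synchronization

variable {ι R E : Type*} [Ring R] [AddCommGroup E] [Module R E]

theorem sum_smul_eq_sum_smul_of_forall_eq_or_eq {s : Finset ι} {a b : ι → R} {v : ι → E} {w : E}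
    (hab : ∑ j ∈ s, a j = ∑ j ∈ s, b j) (h : ∀ j ∈ s, a j = b j ∨ v j = w) :
    ∑ j ∈ s, a j • v j = ∑ j ∈ s, b j • v j := by
  rw [← sub_eq_zero]
  calc ∑ j ∈ s, a j • v j - ∑ j ∈ s, b j • v j
      = ∑ j ∈ s, (a j - b j) • v j := by simp only [sub_smul, Finset.sum_sub_distrib]
    _ = ∑ j ∈ s, (a j - b j) • w :=
        Finset.sum_congr rfl fun j hj ↦ by
          rcases h j hj with hweight | hvalue
          · rw [hweight, sub_self, zero_smul, zero_smul]
          · rw [hvalue]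
    _ = 0 := by rw [← Finset.sum_smul, Finset.sum_sub_distrib, hab, sub_self, zero_smul]

/-- The vector field of a network of identical nodes with internal dynamics `f`, coupled along the
matrix `L` with strength `σ` through the output function `h`. The controlled vector field `G` is
the case `h = H.mulVec`. -/
def coupledVectorField [Fintype ι] (L : Matrix ι ι R) (f h : E → E) (σ : R) (x : ι → E) : ι → E :=
  fun i ↦ f (x i) - σ • ∑ j, L i j • h (x j)

variable (R E) in
/-- The synchronization subspace of a set `C` of nodes: the network states in which all nodes
of `C` are in the same state. -/
def syncSubspace (C : Set ι) : Submodule R (ι → E) where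
  carrier := {x | ∀ i ∈ C, ∀ j ∈ C, x i = x j}
  add_mem' hx hy i hi j hj := congrArg₂ (· + ·) (hx i hi j hj) (hy i hi j hj)
  zero_mem' _ _ _ _ := rfl
  smul_mem' c _ hx i hi j hj := congrArg (c • ·) (hx i hi j hj)

theorem stmt_0_general [Fintype ι] {C : Set ι} {L : Matrix ι ι R}
    (hsum : ∀ i₁ ∈ C, ∀ i₂ ∈ C, ∑ j, L i₁ j = ∑ j, L i₂ j)
    (hrows : ∀ i₁ ∈ C, ∀ i₂ ∈ C, ∀ j ∉ C, L i₁ j = L i₂ j) (f h : E → E) (σ : R) :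
    Set.MapsTo (coupledVectorField L f h σ) (syncSubspace R E C) (syncSubspace R E C) := by
  intro x hx i₁ hi₁ i₂ hi₂
  -- The two rows may differ on `C`, but only in the weights of the common value `h (x i₁)`,
  -- and these weights have the same total.
  have coupling_eq : ∑ j, L i₁ j • h (x j) = ∑ j, L i₂ j • h (x j) := by
    refine sum_smul_eq_sum_smul_of_forall_eq_or_eq (w := h (x i₁)) (hsum i₁ hi₁ i₂ hi₂) fun j _ ↦ ?_
    by_cases hj : j ∈ C
    · exact .inr (congrArg h (hx j hj i₁ hi₁))
    · exact .inl (hrows i₁ hi₁ i₂ hi₂ j hj)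
  simp only [coupledVectorField, hx i₁ hi₁ i₂ hi₂, coupling_eq]

end Synchronization

/-- Invariance of the cluster-synchronization subspace under the controlled
vector field: if the matrix `L''` has zero row sums, equal rows on the cluster
`C` off the cluster indices (H1), and zero entries between distinct cluster
nodes (H2), then the controlled vector field
`G x i = f (x i) - σ • ∑ j, L'' i j • H.mulVec (x j)` takes equal values at any
two cluster nodes whenever `x` is synchronized on the cluster. -/
theorem stmt_0 (N n : ℕ) (hN : 0 < N) (hn : 0 < n)
    (C : Set (Fin N)) (hC : C.Nonempty)
    (L'' : Matrix (Fin N) (Fin N) ℝ)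
    (hrow : ∀ i, ∑ j, L'' i j = 0)
    (H1 : ∀ i₁ ∈ C, ∀ i₂ ∈ C, ∀ j, j ≠ i₁ → j ≠ i₂ → L'' i₁ j = L'' i₂ j)
    (H2 : ∀ i₁ ∈ C, ∀ i₂ ∈ C, i₁ ≠ i₂ → L'' i₁ i₂ = 0)
    (f : (Fin n → ℝ) → (Fin n → ℝ)) (H : Matrix (Fin n) (Fin n) ℝ) (σ : ℝ)
    (G : (Fin N → (Fin n → ℝ)) → Fin N → (Fin n → ℝ))
    (hG : ∀ x i, G x i = f (x i) - σ • ∑ j, L'' i j • (H.mulVec (x j)))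
    (i₁ : Fin N) (hi₁ : i₁ ∈ C) (i₂ : Fin N) (hi₂ : i₂ ∈ C)
    (x : Fin N → (Fin n → ℝ))
    (hx : ∀ i ∈ C, ∀ j ∈ C, x i = x j) :
    G x i₁ = G x i₂ := by
  obtain rfl : G = coupledVectorField L'' f H.mulVec σ := funext₂ hG
  exact stmt_0_general (fun i _ k _ ↦ (hrow i).trans (hrow k).symm)
    (fun i hi k hk j hj ↦ H1 i hi k hk j (hj <| · ▸ hi) (hj <| · ▸ hk)) f H.mulVec σ
    hx i₁ hi₁ i₂ hi₂
end

section
/- Suppose x : ℝ → Fin N → (Fin n → ℝ) is differentiable and satisfies, for every t, the coupled network equations (d/dt) x(t) i = f (x(t) i) - σ • ∑_{j} L'' i j • (H.mulVec (x(t) j)) for every node i, and suppose the initial condition is synchronized on C, i.e. x(0) i = x(0) j for all i, j ∈ C. Then for every time t and all i, j ∈ C one has x(t) i = x(t) j; that is, a synchronous solution on the cluster C exists and solutions starting on the synchronization subspace remain on it. -/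
/-!
Subtract the equations of two nodes `i`, `k` of the cluster. Away from `i` and `k` the two rows of
the coupling matrix agree, and their sums agree, so their difference is a multiple `a` of
`e i - e k`. Hence, treating the trajectories of all nodes as given functions of time, `x i` and
`x k` solve one and the same ODE `y' = f y - σ • a • h y - c t`, and uniqueness of
solutions forces them to agree once they agree at one time.
-/

open Set Topology

section Coupling

variable {ι R M : Type*} [Fintype ι] [Ring R] [AddCommGroup M] [Module R M]

theorem sum_smul_eq_of_sum_eq_zero {d : ι → R} {i k : ι}
    (hd : ∀ j, j ≠ i → j ≠ k → d j = 0) (hsum : ∑ j, d j = 0) (g : ι → M) :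
    ∑ j, d j • g j = d i • (g i - g k) := by
  have hshift : ∑ j, d j • g j = ∑ j, d j • (g j - g k) := by
    simp only [smul_sub, Finset.sum_sub_distrib, ← Finset.sum_smul, hsum, zero_smul, sub_zero]
  rw [hshift]
  refine Fintype.sum_eq_single i fun j hji => ?_
  rcases eq_or_ne j k with rfl | hjk
  · rw [sub_self, smul_zero]
  · rw [hd j hji hjk, zero_smul]

theorem sum_smul_sub_sum_smul_of_sum_eq {r r' : ι → R} {i k : ι}
    (hr : ∀ j, j ≠ i → j ≠ k → r j = r' j) (hsum : ∑ j, r j = ∑ j, r' j) (g : ι → M) :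
    ∑ j, r j • g j - ∑ j, r' j • g j = (r i - r' i) • (g i - g k) := by
  rw [← Finset.sum_sub_distrib]
  simp only [← sub_smul]
  refine sum_smul_eq_of_sum_eq_zero (fun j hji hjk => ?_) ?_ g
  · rw [hr j hji hjk, sub_self]
  · rw [Finset.sum_sub_distrib, hsum, sub_self]

end Coupling

section ODE

variable {E : Type*} [NormedAddCommGroup E] [NormedSpace ℝ E]
  {J : Set ℝ} {u w : ℝ → E} {t₀ : ℝ}

theorem eqOn_of_hasDerivAt_of_locally_lipschitzOnWith {v : ℝ → E → E}
    (hJ : IsOpen J) (hJc : IsPreconnected J)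
    (hv : ∀ t ∈ J, ∀ y, ∃ K, ∃ U ∈ 𝓝 y, ∀ᶠ s in 𝓝 t, LipschitzOnWith K (v s) U)
    (hu : ∀ t ∈ J, HasDerivAt u (v t (u t)) t) (hw : ∀ t ∈ J, HasDerivAt w (v t (w t)) t)
    (ht₀ : t₀ ∈ J) (heq : u t₀ = w t₀) : EqOn u w J := by
  have local_unique : ∀ t ∈ J, u t = w t → u =ᶠ[𝓝 t] w := by
    intro t ht hut
    obtain ⟨K, U, hU, hLip⟩ := hv t ht (u t)
    have solution_mem {z : ℝ → E} (hz : ∀ t ∈ J, HasDerivAt z (v t (z t)) t) (hzt : z t = u t) :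
        ∀ᶠ s in 𝓝 t, HasDerivAt z (v s (z s)) s ∧ z s ∈ U :=
      ((hJ.eventually_mem ht).mono hz).and ((hz t ht).continuousAt (hzt ▸ hU))
    exact ODE_solution_unique_of_eventually hLip (solution_mem hu rfl)
      (solution_mem hw hut.symm) hut
  -- The set of times near which the two solutions agree is open, and closed in `J` by continuity.
  have hsub : J ⊆ {t | u =ᶠ[𝓝 t] w} := by
    refine hJc.subset_of_closure_inter_subset isOpen_setOfPred_eventually_nhds
      ⟨t₀, ht₀, local_unique t₀ ht₀ heq⟩ fun t ⟨hcl, ht⟩ => local_unique t ht ?_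
    exact tendsto_nhds_unique_of_frequently_eq (hu t ht).continuousAt (hw t ht).continuousAt
      ((mem_closure_iff_frequently.mp hcl).mono fun _ hs => hs.eq_of_nhds)
  exact fun t ht => (hsub ht).eq_of_nhds

theorem eqOn_of_hasDerivAt_sub_of_locallyLipschitz {F : E → E} (hF : LocallyLipschitz F) {c : ℝ → E}
    (hJ : IsOpen J) (hJc : IsPreconnected J)
    (hu : ∀ t ∈ J, HasDerivAt u (F (u t) - c t) t)
    (hw : ∀ t ∈ J, HasDerivAt w (F (w t) - c t) t)
    (ht₀ : t₀ ∈ J) (heq : u t₀ = w t₀) : EqOn u w J := by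
  refine eqOn_of_hasDerivAt_of_locally_lipschitzOnWith (v := fun t y => F y - c t) hJ hJc
    (fun t _ y => ?_) hu hw ht₀ heq
  obtain ⟨K, U, hU, hLip⟩ := hF y
  refine ⟨K, U, hU, .of_forall fun s => ?_⟩
  simpa only [LipschitzOnWith, edist_sub_right] using hLip

theorem node_eqOn_of_row_eq {ι : Type*} [Fintype ι] {L : Matrix ι ι ℝ} {i k : ι}
    (hsum : ∑ j, L i j = ∑ j, L k j) (hL : ∀ j, j ≠ i → j ≠ k → L i j = L k j)
    {f h : E → E} (hf : LocallyLipschitz f) (hh : LocallyLipschitz h) (σ : ℝ) {x : ℝ → ι → E}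
    (hJ : IsOpen J) (hJc : IsPreconnected J)
    (hi : ∀ t ∈ J, HasDerivAt (fun s => x s i) (f (x t i) - σ • ∑ j, L i j • h (x t j)) t)
    (hk : ∀ t ∈ J, HasDerivAt (fun s => x s k) (f (x t k) - σ • ∑ j, L k j • h (x t j)) t)
    (ht₀ : t₀ ∈ J) (heq : x t₀ i = x t₀ k) :
    EqOn (fun s => x s i) (fun s => x s k) J := by
  let a : ℝ := L i i - L k i
  let c : ℝ → E := fun t => σ • (∑ j, L k j • h (x t j) - a • h (x t k))
  have input_eq (t : ℝ) :
      ∑ j, L i j • h (x t j) = ∑ j, L k j • h (x t j) + a • (h (x t i) - h (x t k)) :=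
    eq_add_of_sub_eq' (sum_smul_sub_sum_smul_of_sum_eq hL hsum fun j => h (x t j))
  have hF : LocallyLipschitz fun y => f y - σ • a • h y :=
    hf.sub ((lipschitzWith_smul σ).locallyLipschitz.comp
      ((lipschitzWith_smul a).locallyLipschitz.comp hh))
  refine eqOn_of_hasDerivAt_sub_of_locallyLipschitz hF (c := c) hJ hJc
    (fun t ht => (hi t ht).congr_deriv ?_) (fun t ht => (hk t ht).congr_deriv ?_) ht₀ heq
  · rw [input_eq]
    module
  · module

theorem stmt_1_general {ι : Type*} [Fintype ι] {C : Set ι} {L : Matrix ι ι ℝ}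
    (hsum : ∀ i ∈ C, ∀ k ∈ C, ∑ j, L i j = ∑ j, L k j)
    (hL : ∀ i ∈ C, ∀ k ∈ C, ∀ j, j ≠ i → j ≠ k → L i j = L k j)
    {f h : E → E} (hf : LocallyLipschitz f) (hh : LocallyLipschitz h) (σ : ℝ) {x : ℝ → ι → E}
    (hJ : IsOpen J) (hJc : IsPreconnected J)
    (hode : ∀ t ∈ J, ∀ i ∈ C,
      HasDerivAt (fun s => x s i) (f (x t i) - σ • ∑ j, L i j • h (x t j)) t)
    (ht₀ : t₀ ∈ J) (hinit : ∀ i ∈ C, ∀ k ∈ C, x t₀ i = x t₀ k) :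
    ∀ t ∈ J, ∀ i ∈ C, ∀ k ∈ C, x t i = x t k := fun _ ht i hi k hk =>
  node_eqOn_of_row_eq (hsum i hi k hk) (hL i hi k hk) hf hh σ hJ hJc
    (fun t ht => hode t ht i hi) (fun t ht => hode t ht k hk) ht₀ (hinit i hi k hk) ht

end ODE

/-- Existence of the synchronous solution / forward invariance of the
synchronization subspace: if a differentiable trajectory of the controlled
network starts synchronized on the cluster `C`, it stays synchronized on `C`
for all times. -/
theorem stmt_1 (N n : ℕ) (hN : 0 < N) (hn : 0 < n)
    (C : Set (Fin N)) (hC : C.Nonempty)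
    (L'' : Matrix (Fin N) (Fin N) ℝ)
    (hrow : ∀ i, ∑ j, L'' i j = 0)
    (H1 : ∀ i₁ ∈ C, ∀ i₂ ∈ C, ∀ j, j ≠ i₁ → j ≠ i₂ → L'' i₁ j = L'' i₂ j)
    (H2 : ∀ i₁ ∈ C, ∀ i₂ ∈ C, i₁ ≠ i₂ → L'' i₁ i₂ = 0)
    (f : (Fin n → ℝ) → (Fin n → ℝ)) (K : NNReal) (hf : LipschitzWith K f)
    (H : Matrix (Fin n) (Fin n) ℝ) (σ : ℝ)
    (x : ℝ → Fin N → (Fin n → ℝ))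
    (hode : ∀ t, ∀ i, HasDerivAt (fun s => x s i)
      (f (x t i) - σ • ∑ j, L'' i j • (H.mulVec (x t j))) t)
    (hinit : ∀ i ∈ C, ∀ j ∈ C, x 0 i = x 0 j) :
    ∀ t, ∀ i ∈ C, ∀ j ∈ C, x t i = x t j := by
  have hH : LocallyLipschitz H.mulVec :=
    H.mulVecLin.toContinuousLinearMap.lipschitz.locallyLipschitz
  exact fun t => stmt_1_general (fun i _ k _ => (hrow i).trans (hrow k).symm) H1
    hf.locallyLipschitz hH σ isOpen_univ isPreconnected_univ (fun t _ i _ => hode t i)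
    (mem_univ 0) hinit t (mem_univ t)
end

section
/- Suppose all rows of C are equal to a fixed row vector c : Fin n₁ → ℝ, i.e. C i j = c j for all i, j. Then the matrix Rᵀ * C has nonzero entries only in its row indexed by 0: precisely, (Rᵀ * C) 0 j = Real.sqrt n₂ * c j for all j, and (Rᵀ * C) i j = 0 for all i ≠ 0 and all j. -/
open Matrix

/-!
A matrix whose rows all equal `c` is the rank-one product of a constant column with `c`. When that
constant column is proportional to the column `R.col k` and `L * R = 1`, multiplication by `L`
sends the column to a multiple of the `k`-th standard basis vector, so only row `k` survives.
-/

section LeftInverse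

variable {m n p α : Type*} [Fintype m] [DecidableEq n]

theorem mulVec_col_of_mul_eq_one [NonAssocSemiring α] {L : Matrix n m α} {R : Matrix m n α}
    (hLR : L * R = 1) (k : n) : L *ᵥ R.col k = Pi.single k 1 := by
  calc
    L *ᵥ R.col k = (L * R).col k := rfl
    _ = (1 : Matrix n n α).col k := by rw [hLR]
    _ = Pi.single k 1 := by ext i; rw [col_apply, one_eq_pi_single, Pi.single_comm]

theorem col_ne_zero_of_mul_eq_one [NonAssocSemiring α] [Nontrivial α]
    {L : Matrix n m α} {R : Matrix m n α} (hLR : L * R = 1) (k : n) : R.col k ≠ 0 := by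
  intro hcol
  have hsingle := mulVec_col_of_mul_eq_one hLR k
  rw [hcol, mulVec_zero] at hsingle
  exact Pi.single_ne_zero_iff.mpr one_ne_zero hsingle.symm

theorem vecMulVec_single_one [MonoidWithZero α] (k : n) (v : p → α) :
    vecMulVec (Pi.single k 1) v = updateRow 0 k v := by
  rw [Pi.single, update_vecMulVec, zero_vecMulVec, one_smul]

theorem mul_vecMulVec_col_of_mul_eq_one [Semiring α] {L : Matrix n m α} {R : Matrix m n α}
    (hLR : L * R = 1) (k : n) (v : p → α) :
    L * vecMulVec (R.col k) v = updateRow 0 k v := by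
  rw [mul_vecMulVec, mulVec_col_of_mul_eq_one hLR, vecMulVec_single_one]

theorem stmt_4_general [DivisionSemiring α] {L : Matrix n m α} {R : Matrix m n α}
    (hLR : L * R = 1) {k : n} {a : α} (hcol : ∀ i, R i k = a)
    {C : Matrix m p α} {c : p → α} (hC : ∀ i j, C i j = c j) :
    L * C = updateRow 0 k (a⁻¹ • c) := by
  have ha : a ≠ 0 := by
    rintro rfl
    exact col_ne_zero_of_mul_eq_one hLR k (funext hcol)
  have hC_rank_one : C = vecMulVec (R.col k) (a⁻¹ • c) := by
    ext i j
    rw [vecMulVec_apply, col_apply, hcol, hC, Pi.smul_apply, smul_eq_mul, mul_inv_cancel_left₀ ha]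
  rw [hC_rank_one, mul_vecMulVec_col_of_mul_eq_one hLR]

end LeftInverse

/-- If all rows of `C` equal a fixed row vector `c` and `R` is an orthogonal
matrix whose column `0` is the constant vector `1 / √n₂`, then `Rᵀ * C` has
nonzero entries only in the row indexed by `0`: its row `0` is `√n₂ • c` and
all other rows vanish. -/
theorem stmt_4 (n₁ n₂ : ℕ) (hn₁ : 0 < n₁) (hn₂ : 0 < n₂)
    (C : Matrix (Fin n₂) (Fin n₁) ℝ) (c : Fin n₁ → ℝ)
    (hC : ∀ i j, C i j = c j)
    (R : Matrix (Fin n₂) (Fin n₂) ℝ)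
    (hR : Rᵀ * R = 1)
    (hcol : ∀ i, R i ⟨0, hn₂⟩ = 1 / Real.sqrt n₂) :
    (∀ j, (Rᵀ * C) ⟨0, hn₂⟩ j = Real.sqrt n₂ * c j) ∧
      (∀ i, i ≠ ⟨0, hn₂⟩ → ∀ j, (Rᵀ * C) i j = 0) := by
  rw [stmt_4_general hR hcol hC, one_div, inv_inv]
  exact ⟨fun j ↦ by rw [updateRow_self, Pi.smul_apply, smul_eq_mul],
    fun i hi j ↦ by rw [updateRow_ne hi, Matrix.zero_apply]⟩
end

section
/- Suppose there are constants 0 < l, 0 < μ, 0 < τ such that L - l • 1 and μ • 1 - L are positive semidefinite, and for every t the matrix -(τ • 1) - ((A t)ᵀ * L + L * (A t)) is positive semidefinite. Then every differentiable ζ : ℝ → (Fin n → ℝ) satisfying (d/dt) ζ(t) = (A t).mulVec (ζ t) decays exponentially: for all t ≥ 0, ‖ζ(t)‖² ≤ (μ / l) * Real.exp (-(τ / μ) * t) * ‖ζ(0)‖². -/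
open Matrix

/-!
The quadratic form `V t = ⟪L (ζ t), ζ t⟫` is a Lyapunov function. Along a solution,
`V' = ⟪(A† L + L A) ζ, ζ⟫ ≤ -τ ‖ζ‖² ≤ -(τ / μ) V`, so Grönwall's inequality gives
`V t ≤ e^{-(τ / μ) t} V 0`. Comparing `V` with `l ‖ζ‖²` at time `t` and with `μ ‖ζ‖²` at time `0`
turns this into the bound on `‖ζ‖²`.
-/

section Scalar

open Set Real

variable {a : ℝ}

lemma le_mul_exp_of_deriv_right_le {f f' : ℝ → ℝ} {K b : ℝ} (hf : ContinuousOn f (Icc a b))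
    (hf' : ∀ t ∈ Ico a b, HasDerivWithinAt f (f' t) (Ici t) t)
    (bound : ∀ t ∈ Ico a b, f' t ≤ K * f t) :
    ∀ t ∈ Icc a b, f t ≤ f a * exp (K * (t - a)) := by
  intro t ht
  rw [← gronwallBound_ε0]
  exact le_gronwallBound_of_liminf_deriv_right_le hf
    (fun s hs _ hr ↦ (hf' s hs).liminf_right_slope_le hr) le_rfl
    (fun s hs ↦ by simpa only [add_zero] using bound s hs) t ht

theorem le_mul_exp_of_lyapunov {V V' N : ℝ → ℝ} {l μ τ : ℝ} (hl : 0 < l) (hμ : 0 < μ) (hτ : 0 ≤ τ)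
    (hlow : ∀ t ∈ Ici a, l * N t ≤ V t) (hup : ∀ t ∈ Ici a, V t ≤ μ * N t)
    (hV : ∀ t ∈ Ici a, HasDerivWithinAt V (V' t) (Ici a) t)
    (hV' : ∀ t ∈ Ici a, V' t ≤ -τ * N t) :
    ∀ t ∈ Ici a, N t ≤ μ / l * exp (-(τ / μ) * (t - a)) * N a := by
  intro t ht
  have hdecay : ∀ s ∈ Ici a, V' s ≤ -(τ / μ) * V s := fun s hs ↦ calc
    V' s ≤ -τ * N s := hV' s hs
    _ = -(τ / μ) * (μ * N s) := by field_simp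
    _ ≤ -(τ / μ) * V s :=
      mul_le_mul_of_nonpos_left (hup s hs) (neg_nonpos.2 (div_nonneg hτ hμ.le))
  have hVt : V t ≤ V a * exp (-(τ / μ) * (t - a)) :=
    le_mul_exp_of_deriv_right_le
      (fun s hs ↦ (hV s hs.1).continuousWithinAt.mono Icc_subset_Ici_self)
      (fun s hs ↦ (hV s hs.1).mono (Ici_subset_Ici.2 hs.1))
      (fun s hs ↦ hdecay s hs.1) t ⟨ht, le_rfl⟩
  have hNt : l * N t ≤ μ * N a * exp (-(τ / μ) * (t - a)) := calc
    l * N t ≤ V t := hlow t ht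
    _ ≤ V a * exp (-(τ / μ) * (t - a)) := hVt
    _ ≤ μ * N a * exp (-(τ / μ) * (t - a)) := by gcongr; exact hup a self_mem_Ici
  calc
    N t ≤ μ * N a * exp (-(τ / μ) * (t - a)) / l := (le_div_iff₀' hl).2 hNt
    _ = μ / l * exp (-(τ / μ) * (t - a)) * N a := by ring

end Scalar

section InnerProductSpace

open Set
open scoped RealInnerProductSpace

variable {E : Type*} [NormedAddCommGroup E] [InnerProductSpace ℝ E]

lemma inner_apply_self_le_of_le {S T : E →L[ℝ] E} (h : S ≤ T) (x : E) : ⟪S x, x⟫ ≤ ⟪T x, x⟫ := by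
  have hnonneg := ((ContinuousLinearMap.le_def S T).1 h).inner_nonneg_left x
  rwa [_root_.sub_apply, inner_sub_left, sub_nonneg] at hnonneg

lemma inner_smul_one_apply_self (c : ℝ) (x : E) :
    ⟪(c • (1 : E →L[ℝ] E)) x, x⟫ = c * ‖x‖ ^ 2 := by
  rw [_root_.smul_apply, one_apply_eq_self, real_inner_smul_left,
    real_inner_self_eq_norm_sq]

variable [CompleteSpace E]

lemma hasDerivWithinAt_inner_apply_self {A : E →L[ℝ] E} {ζ : ℝ → E} {s : Set ℝ} {t : ℝ}
    (L : E →L[ℝ] E) (hζ : HasDerivWithinAt ζ (A (ζ t)) s t) :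
    HasDerivWithinAt (fun u ↦ ⟪L (ζ u), ζ u⟫) ⟪(star A * L + L * A) (ζ t), ζ t⟫ s t := by
  have hderiv : ⟪(star A * L + L * A) (ζ t), ζ t⟫ =
      ⟪L (ζ t), A (ζ t)⟫ + ⟪L (A (ζ t)), ζ t⟫ := by
    rw [_root_.add_apply, inner_add_left, ContinuousLinearMap.star_eq_adjoint,
      mul_apply_eq_comp, ContinuousLinearMap.adjoint_inner_left,
      mul_apply_eq_comp]
  rw [hderiv]
  exact (L.hasFDerivAt.comp_hasDerivWithinAt t hζ).inner ℝ hζ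

theorem stmt_7_general {L : E →L[ℝ] E} {A : ℝ → E →L[ℝ] E} {l μ τ a : ℝ}
    (hl : 0 < l) (hμ : 0 < μ) (hτ : 0 ≤ τ) (hlow : l • 1 ≤ L) (hup : L ≤ μ • 1)
    (hLMI : ∀ t ∈ Ici a, star (A t) * L + L * A t ≤ -(τ • 1)) {ζ : ℝ → E}
    (hζ : IsIntegralCurveOn ζ (fun t x ↦ A t x) (Ici a)) :
    ∀ t ∈ Ici a, ‖ζ t‖ ^ 2 ≤ μ / l * Real.exp (-(τ / μ) * (t - a)) * ‖ζ a‖ ^ 2 := by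
  refine le_mul_exp_of_lyapunov hl hμ hτ (V := fun t ↦ ⟪L (ζ t), ζ t⟫) (fun t _ ↦ ?_)
    (fun t _ ↦ ?_) (fun t ht ↦ hasDerivWithinAt_inner_apply_self L (hζ t ht)) (fun t ht ↦ ?_)
  · simpa only [inner_smul_one_apply_self] using inner_apply_self_le_of_le hlow (ζ t)
  · simpa only [inner_smul_one_apply_self] using inner_apply_self_le_of_le hup (ζ t)
  · simpa only [← neg_smul, inner_smul_one_apply_self] using
      inner_apply_self_le_of_le (hLMI t ht) (ζ t)

end InnerProductSpace

open scoped ComplexOrder in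
lemma toEuclideanCLM_le_toEuclideanCLM_iff {𝕜 ι : Type*} [RCLike 𝕜] [Fintype ι] [DecidableEq ι]
    {M N : Matrix ι ι 𝕜} :
    toEuclideanCLM (n := ι) (𝕜 := 𝕜) M ≤ toEuclideanCLM (n := ι) (𝕜 := 𝕜) N ↔
      (N - M).PosSemidef := by
  rw [ContinuousLinearMap.le_def, ← map_sub, ← ContinuousLinearMap.isPositive_toLinearMap_iff,
    coe_toEuclideanCLM_eq_toEuclideanLin, isPositive_toEuclideanLin_iff]

/-- Exponential decay from the Lyapunov LMI: if `l • 1 ≤ L ≤ μ • 1` (in the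
semidefinite order), `L` symmetric positive definite, and
`(A t)ᵀ L + L (A t) ≤ -τ • 1` for all `t`, then every solution of
`ζ' = A(t) ζ` satisfies `‖ζ(t)‖² ≤ (μ/l) e^{-(τ/μ) t} ‖ζ(0)‖²` for `t ≥ 0`. -/
theorem stmt_7 (n : ℕ) (hn : 0 < n)
    (L : Matrix (Fin n) (Fin n) ℝ) (hLsymm : L.IsSymm) (hLpos : L.PosDef)
    (A : ℝ → Matrix (Fin n) (Fin n) ℝ)
    (l μ τ : ℝ) (hl : 0 < l) (hμ : 0 < μ) (hτ : 0 < τ)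
    (hlow : (L - l • (1 : Matrix (Fin n) (Fin n) ℝ)).PosSemidef)
    (hup : (μ • (1 : Matrix (Fin n) (Fin n) ℝ) - L).PosSemidef)
    (hLMI : ∀ t, (-(τ • (1 : Matrix (Fin n) (Fin n) ℝ)) -
      ((A t)ᵀ * L + L * (A t))).PosSemidef)
    (ζ : ℝ → EuclideanSpace ℝ (Fin n))
    (hζ : ∀ t, HasDerivAt ζ (Matrix.toEuclideanLin (A t) (ζ t)) t) :
    ∀ t, 0 ≤ t →
      ‖ζ t‖ ^ 2 ≤ (μ / l) * Real.exp (-(τ / μ) * t) * ‖ζ 0‖ ^ 2 := by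
  simp only [← toEuclideanCLM_le_toEuclideanCLM_iff, ← conjTranspose_eq_transpose_of_trivial,
    ← star_eq_conjTranspose, map_add, map_mul, map_neg, map_smul, map_one, map_star]
    at hlow hup hLMI
  simpa only [Set.mem_Ici, sub_zero] using
    stmt_7_general (a := 0) (A := fun t ↦ toEuclideanCLM (𝕜 := ℝ) (A t)) hl hμ hτ.le hlow hup
      (fun t _ ↦ hLMI t) (fun t _ ↦ (hζ t).hasDerivWithinAt)
end

section
/- Assume the LMI hypothesis: there exist a diagonal positive definite matrix L and constants q̄ > 0 and τ > 0 such that for every q ≥ q̄ and every t, the matrix -(τ • 1) - ((J t - q • H)ᵀ * L + L * (J t - q • H)) is positive semidefinite. Assume moreover σ > 0, k > 0 and σ * k > q̄. Then there exist constants Cst > 0 and α > 0 such that every differentiable ζ : ℝ → (Fin n → ℝ) satisfying the transversal variational equation (d/dt) ζ(t) = (J t - (σ * k) • H).mulVec (ζ t) obeys ‖ζ(t)‖ ≤ Cst * Real.exp (-α * t) * ‖ζ(0)‖ for all t ≥ 0; i.e. the transversal perturbations to the synchronous state decay exponentially. -/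
open Matrix

/-!
The quadratic form `V x = xᵀ L x` is a strict Lyapunov function: the matrix inequality at coupling
strength `q = σ k` says `V' ≤ -τ ‖ζ‖²` along every solution `ζ`. Positive definiteness gives
`m ‖x‖² ≤ V x ≤ M ‖x‖²`, so `V' ≤ -(τ / M) V`, and Grönwall's inequality yields exponential decay
of `V`, hence of `‖ζ‖`, with constants `√(M / m)` and `τ / (2 M)`.
-/

open Set

section Lyapunov

variable {t₀ : ℝ}

theorem le_mul_exp_of_hasDerivWithinAt_Ici {v v' : ℝ → ℝ} {K : ℝ}
    (hv : ∀ t ≥ t₀, HasDerivWithinAt v (v' t) (Ici t₀) t) (hle : ∀ t ≥ t₀, v' t ≤ K * v t)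
    {t : ℝ} (ht : t₀ ≤ t) : v t ≤ v t₀ * Real.exp (K * (t - t₀)) := by
  have hcont : ContinuousOn v (Icc t₀ t) := fun s hs =>
    (hv s hs.1).continuousWithinAt.mono Icc_subset_Ici_self
  have hslope : ∀ s ∈ Ico t₀ t, ∀ r, v' s < r →
      ∃ᶠ z in nhdsWithin s (Ioi s), (z - s)⁻¹ * (v z - v s) < r := fun s hs _ hr =>
    ((hv s hs.1).mono (Ici_subset_Ici.2 hs.1)).liminf_right_slope_le hr
  simpa only [gronwallBound_ε0] using
    le_gronwallBound_of_liminf_deriv_right_le (ε := 0) hcont hslope le_rfl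
      (fun s hs => by simpa only [add_zero] using hle s hs.1) t (right_mem_Icc.2 ht)

theorem norm_le_sqrt_mul_exp_of_lyapunov {E : Type*} [SeminormedAddCommGroup E] {ζ : ℝ → E}
    {V V' : ℝ → ℝ} {m M τ : ℝ} (hm : 0 < m) (hM : 0 < M) (hτ : 0 ≤ τ)
    (hlower : ∀ t ≥ t₀, m * ‖ζ t‖ ^ 2 ≤ V t) (hupper : ∀ t ≥ t₀, V t ≤ M * ‖ζ t‖ ^ 2)
    (hV : ∀ t ≥ t₀, HasDerivWithinAt V (V' t) (Ici t₀) t)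
    (hV' : ∀ t ≥ t₀, V' t ≤ -τ * ‖ζ t‖ ^ 2) {t : ℝ} (ht : t₀ ≤ t) :
    ‖ζ t‖ ≤ √(M / m) * Real.exp (-(τ / (2 * M)) * (t - t₀)) * ‖ζ t₀‖ := by
  have hrate : ∀ s ≥ t₀, V' s ≤ -(τ / M) * V s := fun s hs =>
    calc V' s ≤ -(τ / M) * (M * ‖ζ s‖ ^ 2) := (hV' s hs).trans_eq (by field_simp)
      _ ≤ -(τ / M) * V s :=
        mul_le_mul_of_nonpos_left (hupper s hs) (neg_nonpos.2 (by positivity))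
  have hexp : Real.exp (-(τ / M) * (t - t₀)) = Real.exp (-(τ / (2 * M)) * (t - t₀)) ^ 2 := by
    rw [← Real.exp_nat_mul]
    congr 1
    field
  have hdecay : m * ‖ζ t‖ ^ 2 ≤
      M * ‖ζ t₀‖ ^ 2 * Real.exp (-(τ / (2 * M)) * (t - t₀)) ^ 2 :=
    calc m * ‖ζ t‖ ^ 2 ≤ V t := hlower t ht
      _ ≤ V t₀ * Real.exp (-(τ / M) * (t - t₀)) := le_mul_exp_of_hasDerivWithinAt_Ici hV hrate ht
      _ ≤ M * ‖ζ t₀‖ ^ 2 * Real.exp (-(τ / M) * (t - t₀)) := by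
        gcongr
        exact hupper t₀ le_rfl
      _ = M * ‖ζ t₀‖ ^ 2 * Real.exp (-(τ / (2 * M)) * (t - t₀)) ^ 2 := by rw [hexp]
  refine (sq_le_sq₀ (norm_nonneg _) (by positivity)).1 ?_
  rw [mul_pow, mul_pow, Real.sq_sqrt (by positivity), div_mul_eq_mul_div, div_mul_eq_mul_div,
    le_div_iff₀ hm]
  linarith

end Lyapunov

section BilinearForm

variable {E : Type*} [NormedAddCommGroup E] [NormedSpace ℝ E] {B : E →L[ℝ] E →L[ℝ] ℝ}

theorem isCoercive_of_forall_pos [FiniteDimensional ℝ E] (hB : ∀ x, x ≠ 0 → 0 < B x x) :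
    IsCoercive B := by
  have hcont : Continuous fun x => B x x := by fun_prop
  obtain ⟨m, hm, hmle⟩ := (isCompact_sphere (0 : E) 1).exists_forall_le' hcont.continuousOn
    fun x hx => hB x (ne_zero_of_mem_unit_sphere ⟨x, hx⟩)
  refine ⟨m, hm, fun x => ?_⟩
  rcases eq_or_ne x 0 with rfl | hx
  · simp
  have hunit : m ≤ B (‖x‖⁻¹ • x) (‖x‖⁻¹ • x) := hmle _ (by simp [norm_smul, hx])
  calc m * ‖x‖ * ‖x‖ ≤ B (‖x‖⁻¹ • x) (‖x‖⁻¹ • x) * ‖x‖ * ‖x‖ := by gcongr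
    _ = B x x := by
      simp only [map_smul, _root_.smul_apply, smul_eq_mul]
      field_simp

theorem exists_norm_le_mul_exp_of_isCoercive (hB : IsCoercive B) {τ : ℝ} (hτ : 0 < τ) :
    ∃ C > 0, ∃ α > 0, ∀ (t₀ : ℝ) (ζ ζ' : ℝ → E),
      (∀ t ≥ t₀, HasDerivWithinAt ζ (ζ' t) (Ici t₀) t) →
      (∀ t ≥ t₀, B (ζ t) (ζ' t) + B (ζ' t) (ζ t) ≤ -τ * ‖ζ t‖ ^ 2) →
      ∀ t ≥ t₀, ‖ζ t‖ ≤ C * Real.exp (-α * (t - t₀)) * ‖ζ t₀‖ := by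
  obtain ⟨m, hm, hlower⟩ := hB
  -- On the trivial space `‖B‖ = 0`, so `‖B‖` itself cannot serve as the upper constant.
  obtain ⟨M, hM, hBM⟩ : ∃ M > 0, ‖B‖ ≤ M := ⟨‖B‖ + 1, by positivity, by linarith⟩
  have hupper (x : E) : B x x ≤ M * ‖x‖ ^ 2 :=
    calc B x x ≤ ‖B x x‖ := Real.le_norm_self _
      _ ≤ ‖B‖ * ‖x‖ * ‖x‖ := B.le_opNorm₂ x x
      _ ≤ M * ‖x‖ * ‖x‖ := by gcongr
      _ = M * ‖x‖ ^ 2 := by ring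
  refine ⟨√(M / m), by positivity, τ / (2 * M), by positivity, fun t₀ ζ ζ' hζ hdiss t ht => ?_⟩
  exact norm_le_sqrt_mul_exp_of_lyapunov (V := fun s => B (ζ s) (ζ s)) hm hM hτ.le
    (fun s _ => by simpa only [sq, mul_assoc] using hlower (ζ s)) (fun s _ => hupper (ζ s))
    (fun s hs => B.hasDerivWithinAt_of_bilinear (hζ s hs) (hζ s hs)) hdiss ht

end BilinearForm

section Matrix

variable {ι : Type*} [Fintype ι] [DecidableEq ι] {L : Matrix ι ι ℝ}

/-- The continuous bilinear form `(x, y) ↦ xᵀ L y` on Euclidean space, whose diagonal is the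
Lyapunov function attached to the matrix `L`. -/
noncomputable def euclideanBilin (L : Matrix ι ι ℝ) :
    EuclideanSpace ℝ ι →L[ℝ] EuclideanSpace ℝ ι →L[ℝ] ℝ :=
  (Matrix.toBilin (EuclideanSpace.basisFun ι ℝ).toBasis L).toContinuousBilinearMap

theorem euclideanBilin_apply (L : Matrix ι ι ℝ) (x y : EuclideanSpace ℝ ι) :
    euclideanBilin L x y = x.ofLp ⬝ᵥ L *ᵥ y.ofLp := by
  simp [euclideanBilin, Matrix.toBilin_apply, dotProduct, mulVec, Finset.mul_sum, mul_assoc]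

theorem isCoercive_euclideanBilin (hL : L.PosDef) : IsCoercive (euclideanBilin L) := by
  refine isCoercive_of_forall_pos fun x hx => ?_
  rw [euclideanBilin_apply]
  simpa using hL.dotProduct_mulVec_pos (x := x.ofLp) (by simpa using hx)

theorem euclideanBilin_add_le_of_posSemidef {A : Matrix ι ι ℝ} {τ : ℝ}
    (hA : (-(τ • (1 : Matrix ι ι ℝ)) - (Aᵀ * L + L * A)).PosSemidef) (x : EuclideanSpace ℝ ι) :
    euclideanBilin L x (toEuclideanLin A x) + euclideanBilin L (toEuclideanLin A x) x ≤
      -τ * ‖x‖ ^ 2 := by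
  have hform := hA.dotProduct_mulVec_nonneg x.ofLp
  have hnorm : x.ofLp ⬝ᵥ x.ofLp = ‖x‖ ^ 2 := by
    simp only [EuclideanSpace.real_norm_sq_eq, dotProduct, ← sq]
  have htranspose : x.ofLp ⬝ᵥ (Aᵀ * L) *ᵥ x.ofLp = (A *ᵥ x.ofLp) ⬝ᵥ L *ᵥ x.ofLp := by
    rw [← mulVec_mulVec, dotProduct_mulVec, vecMul_transpose]
  rw [star_trivial, sub_mulVec, neg_mulVec, smul_mulVec, one_mulVec, add_mulVec, dotProduct_sub,
    dotProduct_neg, dotProduct_smul, dotProduct_add, hnorm, htranspose, ← mulVec_mulVec,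
    smul_eq_mul] at hform
  simp only [euclideanBilin_apply, ofLp_toLpLin, toLin'_apply]
  linarith

end Matrix

theorem stmt_8_general {ι : Type*} [Fintype ι] [DecidableEq ι] {L : Matrix ι ι ℝ} (hL : L.PosDef)
    {τ : ℝ} (hτ : 0 < τ) :
    ∃ C > 0, ∃ α > 0, ∀ (A : ℝ → Matrix ι ι ℝ) (t₀ : ℝ),
      (∀ t ≥ t₀,
        (-(τ • (1 : Matrix ι ι ℝ)) - ((A t)ᵀ * L + L * A t)).PosSemidef) →
      ∀ ζ : ℝ → EuclideanSpace ℝ ι,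
        (∀ t ≥ t₀, HasDerivWithinAt ζ (toEuclideanLin (A t) (ζ t)) (Ici t₀) t) →
        ∀ t ≥ t₀, ‖ζ t‖ ≤ C * Real.exp (-α * (t - t₀)) * ‖ζ t₀‖ := by
  obtain ⟨C, hC, α, hα, hdecay⟩ :=
    exists_norm_le_mul_exp_of_isCoercive (isCoercive_euclideanBilin hL) hτ
  exact ⟨C, hC, α, hα, fun A t₀ hLMI ζ hζ => hdecay t₀ ζ _ hζ fun t ht =>
    euclideanBilin_add_le_of_posSemidef (hLMI t ht) (ζ t)⟩

/-- Exponential stability of the transversal variational equation: under the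
LMI hypothesis with diagonal positive definite `L`, constants `qbar, τ > 0`,
and `σ * k > qbar` with `σ, k > 0`, every solution of
`ζ' = (J(t) - σ k H) ζ` decays exponentially. -/
theorem stmt_8 (n : ℕ) (hn : 0 < n)
    (H : Matrix (Fin n) (Fin n) ℝ) (J : ℝ → Matrix (Fin n) (Fin n) ℝ)
    (σ k : ℝ)
    (L : Matrix (Fin n) (Fin n) ℝ)
    (hLdiag : ∀ i j, i ≠ j → L i j = 0) (hLpos : L.PosDef)
    (qbar τ : ℝ) (hqbar : 0 < qbar) (hτ : 0 < τ)
    (hLMI : ∀ q, qbar ≤ q → ∀ t,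
      (-(τ • (1 : Matrix (Fin n) (Fin n) ℝ)) -
        ((J t - q • H)ᵀ * L + L * (J t - q • H))).PosSemidef)
    (hσ : 0 < σ) (hk : 0 < k) (hσk : qbar < σ * k) :
    ∃ Cst > 0, ∃ α > 0, ∀ ζ : ℝ → EuclideanSpace ℝ (Fin n),
      (∀ t, HasDerivAt ζ
        (Matrix.toEuclideanLin (J t - (σ * k) • H) (ζ t)) t) →
      ∀ t, 0 ≤ t → ‖ζ t‖ ≤ Cst * Real.exp (-α * t) * ‖ζ 0‖ := by
  obtain ⟨C, hC, α, hα, hdecay⟩ := stmt_8_general hLpos hτ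
  refine ⟨C, hC, α, hα, fun ζ hζ t ht => ?_⟩
  simpa only [sub_zero] using hdecay (fun s => J s - (σ * k) • H) 0
    (fun s _ => hLMI (σ * k) hσk.le s) ζ (fun s _ => (hζ s).hasDerivWithinAt) t ht
end

section
/- Let T* ⊆ S satisfy: (i) every i ∈ S with c i ≤ 0 belongs to T*; (ii) the cardinality of T* equals max k̄ (card {i ∈ S | c i ≤ 0}); (iii) for every i ∈ T* and every j ∈ S \ T*, c i ≤ c j. Then T* is an optimal solution of the reduced optimization problem: for every T ⊆ S with k̄ ≤ card T, one has ∑_{i ∈ T*} c i ≤ ∑_{i ∈ T} c i; and k̄ ≤ card T*. -/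
/-!
Only the nodes of `Tstar \ T` and `T \ Tstar` matter. If at least `kbar` nodes have nonpositive
cost, then `Tstar` is exactly the set of these nodes, which minimises the cost even without the
cardinality constraint. Otherwise `|Tstar| = kbar ≤ |T|`, so `Tstar \ T` injects into `T \ Tstar`;
such an injection never lowers the cost of a node, and the nodes it misses have nonnegative cost.
-/

open Finset

section OrderedAddCommMonoid

variable {ι κ M : Type*} [AddCommMonoid M] [Preorder M] [IsOrderedAddMonoid M]

theorem sum_le_sum_of_forall_le_of_card_le {s : Finset ι} {t : Finset κ} {f : ι → M} {g : κ → M}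
    (hfg : ∀ i ∈ s, ∀ j ∈ t, f i ≤ g j) (hg : ∀ j ∈ t, 0 ≤ g j) (hcard : #s ≤ #t) :
    ∑ i ∈ s, f i ≤ ∑ j ∈ t, g j := by
  obtain ⟨e⟩ : Nonempty (s ↪ t) := Function.Embedding.nonempty_of_card_le (by simpa using hcard)
  calc
    ∑ i ∈ s, f i = ∑ i : s, f i := (sum_coe_sort s f).symm
    _ ≤ ∑ i : s, g (e i) := sum_le_sum fun i _ ↦ hfg i i.2 (e i) (e i).2
    _ = ∑ j ∈ univ.map e, g j := (sum_map univ e fun j ↦ g j).symm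
    _ ≤ ∑ j : t, g j := sum_le_univ_sum_of_nonneg fun j ↦ hg j j.2
    _ = ∑ j ∈ t, g j := sum_coe_sort t g

variable [DecidableEq ι] {s t : Finset ι} {c : ι → M}

-- Unlike `Finset.sum_sdiff_le_sum_sdiff`, this needs no cancellation, so it allows infinite costs.
theorem sum_le_sum_of_sum_sdiff_le_sum_sdiff (h : ∑ i ∈ s \ t, c i ≤ ∑ i ∈ t \ s, c i) :
    ∑ i ∈ s, c i ≤ ∑ i ∈ t, c i := by
  rw [← sum_inter_add_sum_sdiff s t, ← sum_inter_add_sum_sdiff t s, inter_comm t s]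
  gcongr

theorem sum_le_sum_of_forall_sdiff_le_of_card_le
    (hle : ∀ i ∈ s \ t, ∀ j ∈ t \ s, c i ≤ c j) (hnonneg : ∀ j ∈ t \ s, 0 ≤ c j)
    (hcard : #s ≤ #t) : ∑ i ∈ s, c i ≤ ∑ i ∈ t, c i :=
  sum_le_sum_of_sum_sdiff_le_sum_sdiff <|
    sum_le_sum_of_forall_le_of_card_le hle hnonneg (card_sdiff_le_card_sdiff_iff.2 hcard)

end OrderedAddCommMonoid

section LinearOrderedAddCommMonoid

variable {ι M : Type*} [AddCommMonoid M] [LinearOrder M] [IsOrderedAddMonoid M]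

theorem sum_filter_nonpos_le_sum_of_subset {S T : Finset ι} (c : ι → M) (hT : T ⊆ S) :
    ∑ i ∈ S with c i ≤ 0, c i ≤ ∑ i ∈ T, c i := by
  classical
  refine sum_le_sum_of_sum_sdiff_le_sum_sdiff ((sum_nonpos ?_).trans (sum_nonneg ?_))
  · intro i hi
    exact (mem_filter.1 (mem_sdiff.1 hi).1).2
  · intro j hj
    obtain ⟨hjT, hj⟩ := mem_sdiff.1 hj
    exact le_of_not_ge fun hcj ↦ hj (mem_filter.2 ⟨hT hjT, hcj⟩)

theorem stmt_9_general [DecidableEq ι] (S : Finset ι) (c : ι → M) (kbar : ℕ) (Tstar : Finset ι)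
    (h1 : ∀ i ∈ S, c i ≤ 0 → i ∈ Tstar)
    (h2 : #Tstar = max kbar #{i ∈ S | c i ≤ 0})
    (h3 : ∀ i ∈ Tstar, ∀ j ∈ S \ Tstar, c i ≤ c j) :
    (∀ T ⊆ S, kbar ≤ #T → ∑ i ∈ Tstar, c i ≤ ∑ i ∈ T, c i) ∧ kbar ≤ #Tstar := by
  refine ⟨fun T hT hk ↦ ?_, h2 ▸ le_max_left _ _⟩
  rcases le_total kbar #{i ∈ S | c i ≤ 0} with hle | hge
  · have hfilter : {i ∈ S | c i ≤ 0} = Tstar :=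
      eq_of_subset_of_card_le (fun i hi ↦ h1 i (mem_filter.1 hi).1 (mem_filter.1 hi).2)
        (h2.trans (max_eq_right hle)).le
    exact hfilter ▸ sum_filter_nonpos_le_sum_of_subset c hT
  · have hcard : #Tstar ≤ #T := (h2.trans (max_eq_left hge)).trans_le hk
    have hsdiff : T \ Tstar ⊆ S \ Tstar := sdiff_subset_sdiff hT Subset.rfl
    have hnonneg : ∀ j ∈ S \ Tstar, 0 ≤ c j := fun j hj ↦
      le_of_not_ge fun hcj ↦ (mem_sdiff.1 hj).2 (h1 j (mem_sdiff.1 hj).1 hcj)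
    exact sum_le_sum_of_forall_sdiff_le_of_card_le
      (fun i hi j hj ↦ h3 i (mem_sdiff.1 hi).1 j (hsdiff hj)) (fun j hj ↦ hnonneg j (hsdiff hj))
      hcard

end LinearOrderedAddCommMonoid

/-- Optimality of the greedy selection for the reduced problem
`min ∑_{i ∈ T} c i` subject to `T ⊆ S`, `k̄ ≤ |T|`: the set `Tstar`
containing all nonpositive-cost nodes, of cardinality
`max kbar |{i ∈ S | c i ≤ 0}|`, and consisting of cheapest nodes, is optimal
and feasible. -/
theorem stmt_9 {ι : Type*} [DecidableEq ι]
    (S : Finset ι) (c : ι → ℝ) (kbar : ℕ) (hkbar : kbar ≤ S.card)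
    (Tstar : Finset ι) (hsub : Tstar ⊆ S)
    (h1 : ∀ i ∈ S, c i ≤ 0 → i ∈ Tstar)
    (h2 : Tstar.card = max kbar (S.filter (fun i => c i ≤ 0)).card)
    (h3 : ∀ i ∈ Tstar, ∀ j ∈ S \ Tstar, c i ≤ c j) :
    (∀ T ⊆ S, kbar ≤ T.card → ∑ i ∈ Tstar, c i ≤ ∑ i ∈ T, c i) ∧
      kbar ≤ Tstar.card :=
  stmt_9_general S c kbar Tstar h1 h2 h3
end

section
/- Define the total control cost of a subset T ⊆ S by Cost(T) = (∑_{i ∈ T} c⁺ i) + (∑_{i ∈ S \ T} c⁻ i) + c̄. Let T* ⊆ S satisfy: (i) every i ∈ S with c⁺ i - c⁻ i ≤ 0 belongs to T*; (ii) card T* = max k̄ (card {i ∈ S | c⁺ i - c⁻ i ≤ 0}); (iii) for every i ∈ T* and every j ∈ S \ T*, c⁺ i - c⁻ i ≤ c⁺ j - c⁻ j. Then T* minimizes the total control cost among all feasible subsets: for every T ⊆ S with k̄ ≤ card T, Cost(T*) ≤ Cost(T); moreover Cost(T*) = (∑_{i ∈ S} c⁻ i) + (∑_{i ∈ T*} (c⁺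 i - c⁻ i)) + c̄. -/
/-!
Relative to the empty selection, choosing `T` costs `∑ i ∈ T, (cp i - cm i)`, so only the marginal
costs `cp i - cm i` matter. Adding to a feasible `T` all nodes of `S` with nonpositive marginal cost
does not increase the cost, and the enlarged set has at least as many elements as `Tstar`.
The elements of `Tstar` outside the enlarged set can then be matched injectively with elements of
the enlarged set outside `Tstar`, each at least as expensive, and the unmatched ones have
nonnegative marginal cost.
-/

theorem sum_le_sum_of_card_le_card {ι κ M : Type*} [AddCommMonoid M] [Preorder M] [AddLeftMono M]
    {s : Finset ι} {t : Finset κ} {f : ι → M} {g : κ → M} (hcard : s.card ≤ t.card)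
    (hle : ∀ i ∈ s, ∀ j ∈ t, f i ≤ g j) (hnonneg : ∀ j ∈ t, 0 ≤ g j) :
    ∑ i ∈ s, f i ≤ ∑ j ∈ t, g j := by
  obtain ⟨e⟩ : Nonempty (s ↪ t) :=
    Function.Embedding.nonempty_of_card_le (by simpa only [Fintype.card_coe] using hcard)
  calc
    ∑ i ∈ s, f i = ∑ i : s, f i := (Finset.sum_coe_sort s f).symm
    _ ≤ ∑ i : s, g (e i) := Finset.sum_le_sum fun i _ => hle i i.2 (e i) (e i).2
    _ = ∑ j ∈ Finset.univ.map e, g j := (Finset.sum_map _ e fun j => g j).symm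
    _ ≤ ∑ j : t, g j :=
      Finset.sum_le_sum_of_subset_of_nonneg (Finset.subset_univ _) fun j _ _ => hnonneg j j.2
    _ = ∑ j ∈ t, g j := Finset.sum_coe_sort t g

theorem sum_le_sum_of_forall_sdiff_le {ι M : Type*} [DecidableEq ι] [AddCommMonoid M]
    [Preorder M] [AddLeftMono M] {s t : Finset ι} {f : ι → M}
    (hcard : s.card ≤ t.card) (hle : ∀ i ∈ s \ t, ∀ j ∈ t \ s, f i ≤ f j)
    (hnonneg : ∀ j ∈ t \ s, 0 ≤ f j) :
    ∑ i ∈ s, f i ≤ ∑ i ∈ t, f i := by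
  have hsdiff : ∑ i ∈ s \ t, f i ≤ ∑ i ∈ t \ s, f i :=
    sum_le_sum_of_card_le_card (Finset.card_sdiff_le_card_sdiff_iff.2 hcard) hle hnonneg
  rw [← Finset.sum_inter_add_sum_sdiff s t, ← Finset.sum_inter_add_sum_sdiff t s,
    Finset.inter_comm t s]
  gcongr

theorem sum_le_sum_of_card_le_max_of_forall_le {ι M : Type*} [DecidableEq ι] [AddCommMonoid M]
    [LinearOrder M] [AddLeftMono M] {S s t : Finset ι} {f : ι → M} {k : ℕ}
    (hnonpos : ∀ i ∈ S, f i ≤ 0 → i ∈ s)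
    (hcard : s.card ≤ max k (S.filter (fun i => f i ≤ 0)).card)
    (hle : ∀ i ∈ s, ∀ j ∈ S \ s, f i ≤ f j) (ht : t ⊆ S) (hk : k ≤ t.card) :
    ∑ i ∈ s, f i ≤ ∑ i ∈ t, f i := by
  set N := S.filter (fun i => f i ≤ 0)
  have hsub : (t ∪ N) \ s ⊆ S \ s :=
    Finset.sdiff_subset_sdiff (Finset.union_subset ht (Finset.filter_subset _ S)) subset_rfl
  have hcard_union : s.card ≤ (t ∪ N).card :=
    hcard.trans <| max_le (hk.trans (Finset.card_le_card Finset.subset_union_left))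
      (Finset.card_le_card Finset.subset_union_right)
  have hnonneg : ∀ j ∈ S \ s, 0 ≤ f j := fun j hj =>
    have ⟨hjS, hjs⟩ := Finset.mem_sdiff.1 hj
    le_of_not_ge fun hj' => hjs (hnonpos j hjS hj')
  calc
    ∑ i ∈ s, f i ≤ ∑ i ∈ t ∪ N, f i :=
      sum_le_sum_of_forall_sdiff_le hcard_union
        (fun i hi j hj => hle i (Finset.mem_sdiff.1 hi).1 j (hsub hj))
        (fun j hj => hnonneg j (hsub hj))
    _ ≤ ∑ i ∈ t, f i :=
      Finset.sum_le_sum_of_subset_of_nonpos' Finset.subset_union_left fun i hi hit =>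
        (Finset.mem_filter.1 ((Finset.mem_union.1 hi).resolve_left hit)).2

/-- The total control cost of choosing `T` as the common successor set among the candidates `S`:
each node of `T` costs `cp`, each remaining candidate costs `cm`, and `cbar` is the fixed cost of
removing the intra-cluster links. It is meant for `T ⊆ S`, which is not enforced. -/
def totalControlCost {ι M : Type*} [DecidableEq ι] [AddCommMonoid M] (S : Finset ι)
    (cp cm : ι → M) (cbar : M) (T : Finset ι) : M :=
  (∑ i ∈ T, cp i) + (∑ i ∈ S \ T, cm i) + cbar

theorem totalControlCost_eq_sum_add_sum_sub {ι M : Type*} [DecidableEq ι] [AddCommGroup M]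
    {S T : Finset ι} (cp cm : ι → M) (cbar : M) (hT : T ⊆ S) :
    totalControlCost S cp cm cbar T = (∑ i ∈ S, cm i) + (∑ i ∈ T, (cp i - cm i)) + cbar := by
  rw [totalControlCost, Finset.sum_sub_distrib, ← Finset.sum_sdiff hT]
  abel

theorem stmt_10_general {ι M : Type*} [DecidableEq ι] [AddCommGroup M] [LinearOrder M]
    [IsOrderedAddMonoid M] (S : Finset ι) (cp cm : ι → M) (cbar : M) (kbar : ℕ)
    (Tstar : Finset ι) (hsub : Tstar ⊆ S)
    (h1 : ∀ i ∈ S, cp i - cm i ≤ 0 → i ∈ Tstar)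
    (h2 : Tstar.card ≤ max kbar (S.filter (fun i => cp i - cm i ≤ 0)).card)
    (h3 : ∀ i ∈ Tstar, ∀ j ∈ S \ Tstar, cp i - cm i ≤ cp j - cm j) :
    (∀ T ⊆ S, kbar ≤ T.card →
      totalControlCost S cp cm cbar Tstar ≤ totalControlCost S cp cm cbar T) ∧
      totalControlCost S cp cm cbar Tstar =
        (∑ i ∈ S, cm i) + (∑ i ∈ Tstar, (cp i - cm i)) + cbar := by
  refine ⟨fun T hT hk => ?_, totalControlCost_eq_sum_add_sum_sub cp cm cbar hsub⟩
  rw [totalControlCost_eq_sum_add_sum_sub cp cm cbar hsub,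
    totalControlCost_eq_sum_add_sum_sub cp cm cbar hT]
  have hmarginal : ∑ i ∈ Tstar, (cp i - cm i) ≤ ∑ i ∈ T, (cp i - cm i) :=
    sum_le_sum_of_card_le_max_of_forall_le h1 h2 h3 hT hk
  gcongr

/-- Optimality of the greedy selection for the total control cost
`Cost T = ∑_{i ∈ T} c⁺ i + ∑_{i ∈ S \ T} c⁻ i + c̄` among feasible subsets
`T ⊆ S` with `kbar ≤ |T|`, together with the formula for the optimal cost. -/
theorem stmt_10 {ι : Type*} [DecidableEq ι]
    (S : Finset ι) (cp cm : ι → ℝ) (cbar : ℝ)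
    (kbar : ℕ) (hkbar : kbar ≤ S.card)
    (Cost : Finset ι → ℝ)
    (hCost : ∀ T, Cost T = (∑ i ∈ T, cp i) + (∑ i ∈ S \ T, cm i) + cbar)
    (Tstar : Finset ι) (hsub : Tstar ⊆ S)
    (h1 : ∀ i ∈ S, cp i - cm i ≤ 0 → i ∈ Tstar)
    (h2 : Tstar.card = max kbar (S.filter (fun i => cp i - cm i ≤ 0)).card)
    (h3 : ∀ i ∈ Tstar, ∀ j ∈ S \ Tstar, cp i - cm i ≤ cp j - cm j) :
    (∀ T ⊆ S, kbar ≤ T.card → Cost Tstar ≤ Cost T) ∧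
      Cost Tstar = (∑ i ∈ S, cm i) + (∑ i ∈ Tstar, (cp i - cm i)) + cbar := by
  obtain rfl : Cost = totalControlCost S cp cm cbar := funext hCost
  exact stmt_10_general S cp cm cbar kbar Tstar hsub h1 h2.le h3
end
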